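/- Let ψ(x) = φ(|x|) be a radial density on ℝ²∖{0} and let γ be a closed ψ-minimal plane curve whose image is contained in ℝ²∖{0}. Then γ is starshaped with respect to the origin, that is, ⟨γ(u), N(u)⟩ ≠ 0 for every u. (The proof uses that every straight line through the origin is ψ-minimal for a radial density, together with uniqueness for the second-order ODE satisfied by ψ-minimal curves.) -/

import Mathlib

noncomputable section
open Real Set

def dot2 (v w : ℝ × ℝ) : ℝ := v.1 * w.1 + v.2 * w.2

def nrm2 (v : ℝ × ℝ) : ℝ := Real.sqrt (v.1 ^ 2 + v.2 ^ 2)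

def Jrot (v : ℝ × ℝ) : ℝ × ℝ := (-v.2, v.1)

structure IsClosedCurve (γ : ℝ → ℝ × ℝ) : Prop where
  smooth : ContDiff ℝ (⊤ : ℕ∞) γ
  periodic : Function.Periodic γ (2 * π)
  regular : ∀ u, deriv γ u ≠ 0

def tangentC (γ : ℝ → ℝ × ℝ) (u : ℝ) : ℝ × ℝ := (nrm2 (deriv γ u))⁻¹ • deriv γ u

def normalC (γ : ℝ → ℝ × ℝ) (u : ℝ) : ℝ × ℝ := Jrot (tangentC γ u)

def arcDeriv {F : Type*} [NormedAddCommGroup F] [NormedSpace ℝ F]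
    (γ : ℝ → ℝ × ℝ) (h : ℝ → F) (u : ℝ) : F :=
  (nrm2 (deriv γ u))⁻¹ • deriv h u

def curvature (γ : ℝ → ℝ × ℝ) (u : ℝ) : ℝ :=
  dot2 (arcDeriv γ (tangentC γ) u) (normalC γ u)

def psiCurv (ψ : ℝ × ℝ → ℝ) (γ : ℝ → ℝ × ℝ) (u : ℝ) : ℝ :=
  curvature γ u - fderiv ℝ ψ (γ u) (normalC γ u)

def IsPsiMinimal (ψ : ℝ × ℝ → ℝ) (γ : ℝ → ℝ × ℝ) : Prop :=
  ∀ u, psiCurv ψ γ u = 0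

def signedArea (γ : ℝ → ℝ × ℝ) : ℝ :=
  (1/2) * ∫ u in (0:ℝ)..(2*π), ((γ u).1 * (deriv γ u).2 - (γ u).2 * (deriv γ u).1)

def turningNumber (γ : ℝ → ℝ × ℝ) : ℝ :=
  (1/(2*π)) * ∫ u in (0:ℝ)..(2*π), curvature γ u * nrm2 (deriv γ u)

def windingNumber (γ : ℝ → ℝ × ℝ) : ℝ :=
  (1/(2*π)) * ∫ u in (0:ℝ)..(2*π),
    ((γ u).1 * (deriv γ u).2 - (γ u).2 * (deriv γ u).1) / (nrm2 (γ u))^2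

def hess2 (ψ : ℝ × ℝ → ℝ) (x v : ℝ × ℝ) : ℝ :=
  fderiv ℝ (fun y => fderiv ℝ ψ y v) x v

def SmoothFamily (γ : ℝ → ℝ → ℝ × ℝ) : Prop :=
  ContDiff ℝ (⊤ : ℕ∞) fun p : ℝ × ℝ => γ p.1 p.2

/-!
The support function `h = ⟨γ, N⟩` of a regular curve satisfies `h' = -|γ'| k ⟨γ, T⟩`. For a radial
density, ψ-minimality says that `k = (φ'(r) / r) h`, where `r = |γ|`, while
`(φ ∘ r)' = (φ'(r) / r) |γ'| ⟨γ, T⟩`. Hence `exp (φ ∘ r) * h` is constant (Clairaut's first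
integral), and `h` vanishes either everywhere or nowhere. By Rolle's theorem the radius of a closed
curve has a critical point, where `⟨γ, T⟩ = 0`; since `⟨γ, T⟩² + h² = r²`, the function `h` does not
vanish there.
-/

section Plane

variable {v w : ℝ × ℝ}

theorem dot2_comm (v w : ℝ × ℝ) : dot2 v w = dot2 w v := by
  simp only [dot2]; ring

theorem dot2_smul_left (a : ℝ) (v w : ℝ × ℝ) : dot2 (a • v) w = a * dot2 v w := by
  simp only [dot2, Prod.smul_fst, Prod.smul_snd, smul_eq_mul]; ring

theorem dot2_smul_right (a : ℝ) (v w : ℝ × ℝ) : dot2 v (a • w) = a * dot2 v w := by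
  rw [dot2_comm, dot2_smul_left, dot2_comm]

theorem dot2_Jrot_self (v : ℝ × ℝ) : dot2 v (Jrot v) = 0 := by
  simp only [dot2, Jrot]; ring

theorem Jrot_smul (a : ℝ) (v : ℝ × ℝ) : Jrot (a • v) = a • Jrot v := by
  simp [Jrot]

theorem Jrot_Jrot (v : ℝ × ℝ) : Jrot (Jrot v) = -v := rfl

theorem dot2_sq_add_dot2_Jrot_sq (v w : ℝ × ℝ) :
    dot2 v w ^ 2 + dot2 v (Jrot w) ^ 2 = dot2 v v * dot2 w w := by
  simp only [dot2, Jrot]; ring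

theorem eq_dot2_smul_add_dot2_Jrot_smul (hw : dot2 w w = 1) (v : ℝ × ℝ) :
    v = dot2 v w • w + dot2 v (Jrot w) • Jrot w := by
  simp only [dot2] at hw
  ext <;> simp only [dot2, Jrot, Prod.fst_add, Prod.snd_add, Prod.smul_fst, Prod.smul_snd,
    smul_eq_mul]
  · linear_combination -v.1 * hw
  · linear_combination -v.2 * hw

theorem dot2_self_pos (hv : v ≠ 0) : 0 < dot2 v v := by
  rcases not_and_or.1 (mt Prod.mk_eq_zero.2 hv) with h | h
  · exact add_pos_of_pos_of_nonneg (mul_self_pos.2 h) (mul_self_nonneg _)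
  · exact add_pos_of_nonneg_of_pos (mul_self_nonneg _) (mul_self_pos.2 h)

theorem nrm2_eq_sqrt_dot2 (v : ℝ × ℝ) : nrm2 v = √(dot2 v v) := by
  simp only [nrm2, dot2, pow_two]

theorem nrm2_pos (hv : v ≠ 0) : 0 < nrm2 v := by
  rw [nrm2_eq_sqrt_dot2]
  exact Real.sqrt_pos.2 (dot2_self_pos hv)

theorem nrm2_sq (v : ℝ × ℝ) : nrm2 v ^ 2 = dot2 v v := by
  rw [nrm2_eq_sqrt_dot2]
  exact Real.sq_sqrt (add_nonneg (mul_self_nonneg _) (mul_self_nonneg _))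

end Plane

section Calculus

variable {f g : ℝ → ℝ × ℝ} {f' g' p : ℝ × ℝ} {φ : ℝ → ℝ} {u : ℝ}

theorem hasDerivAt_dot2 (hf : HasDerivAt f f' u) (hg : HasDerivAt g g' u) :
    HasDerivAt (fun t => dot2 (f t) (g t)) (dot2 f' (g u) + dot2 (f u) g') u := by
  have hf₁ : HasDerivAt (fun t => (f t).1) f'.1 u := hf.fst
  have hf₂ : HasDerivAt (fun t => (f t).2) f'.2 u := hf.snd
  have hg₁ : HasDerivAt (fun t => (g t).1) g'.1 u := hg.fst
  have hg₂ : HasDerivAt (fun t => (g t).2) g'.2 u := hg.snd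
  refine ((hf₁.mul hg₁).add (hf₂.mul hg₂)).congr_deriv ?_
  simp only [dot2]; ring

theorem hasDerivAt_Jrot (hf : HasDerivAt f f' u) :
    HasDerivAt (fun t => Jrot (f t)) (Jrot f') u := by
  have hf₁ : HasDerivAt (fun t => (f t).1) f'.1 u := hf.fst
  have hf₂ : HasDerivAt (fun t => (f t).2) f'.2 u := hf.snd
  exact hf₂.neg.prodMk hf₁

theorem hasFDerivAt_nrm2 (hp : p ≠ 0) :
    HasFDerivAt nrm2 ((nrm2 p)⁻¹ •
      (p.1 • ContinuousLinearMap.fst ℝ ℝ ℝ + p.2 • ContinuousLinearMap.snd ℝ ℝ ℝ)) p := by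
  have hsq : p.1 ^ 2 + p.2 ^ 2 ≠ 0 := by
    simpa only [dot2, pow_two] using (dot2_self_pos hp).ne'
  have hfst : HasFDerivAt Prod.fst (ContinuousLinearMap.fst ℝ ℝ ℝ) p := hasFDerivAt_fst
  have hsnd : HasFDerivAt Prod.snd (ContinuousLinearMap.snd ℝ ℝ ℝ) p := hasFDerivAt_snd
  refine (((hfst.pow 2).add (hsnd.pow 2)).sqrt hsq).congr_fderiv ?_
  ext <;> simp [nrm2] <;> field_simp

theorem differentiableAt_comp_nrm2 (hp : p ≠ 0) (hφ : DifferentiableAt ℝ φ (nrm2 p)) :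
    DifferentiableAt ℝ (fun x => φ (nrm2 x)) p :=
  hφ.comp p (hasFDerivAt_nrm2 hp).differentiableAt

theorem fderiv_comp_nrm2_apply (hp : p ≠ 0) (hφ : DifferentiableAt ℝ φ (nrm2 p)) (w : ℝ × ℝ) :
    fderiv ℝ (fun x => φ (nrm2 x)) p w = deriv φ (nrm2 p) / nrm2 p * dot2 p w := by
  have h := (hφ.hasDerivAt.comp_hasFDerivAt p (hasFDerivAt_nrm2 hp)).fderiv
  simp only [Function.comp_def] at h
  simp only [h, dot2, smul_apply, add_apply, ContinuousLinearMap.coe_fst',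
    ContinuousLinearMap.coe_snd', smul_eq_mul]
  ring

theorem exists_dot2_deriv_eq_zero_of_nrm2_eq (hf : Differentiable ℝ f) {a b : ℝ} (hab : a < b)
    (hfab : nrm2 (f a) = nrm2 (f b)) : ∃ m, dot2 (f m) (deriv f m) = 0 := by
  have hderiv (t : ℝ) := hasDerivAt_dot2 (hf t).hasDerivAt (hf t).hasDerivAt
  obtain ⟨m, -, hm⟩ := exists_hasDerivAt_eq_zero hab
    (fun t _ => (hderiv t).continuousAt.continuousWithinAt)
    (by rw [← nrm2_sq, hfab, nrm2_sq]) (fun t _ => hderiv t)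
  refine ⟨m, ?_⟩
  rw [dot2_comm (deriv f m)] at hm
  linarith

end Calculus

section RegularCurve

variable {γ : ℝ → ℝ × ℝ} {u : ℝ}

theorem nrm2_deriv_smul_tangentC (hγ : deriv γ u ≠ 0) :
    nrm2 (deriv γ u) • tangentC γ u = deriv γ u :=
  smul_inv_smul₀ (nrm2_pos hγ).ne' _

theorem dot2_tangentC_self (hγ : deriv γ u ≠ 0) : dot2 (tangentC γ u) (tangentC γ u) = 1 := by
  have := (nrm2_pos hγ).ne'
  rw [tangentC, dot2_smul_left, dot2_smul_right, ← nrm2_sq]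
  field_simp

theorem differentiableAt_tangentC (hγ : deriv γ u ≠ 0) (hγ' : DifferentiableAt ℝ (deriv γ) u) :
    DifferentiableAt ℝ (tangentC γ) u :=
  (((hasFDerivAt_nrm2 hγ).differentiableAt.comp u hγ').inv (nrm2_pos hγ).ne').smul hγ'

theorem dot2_deriv_tangentC_tangentC (hγ : ∀ t, deriv γ t ≠ 0)
    (hγ' : DifferentiableAt ℝ (deriv γ) u) : dot2 (deriv (tangentC γ) u) (tangentC γ u) = 0 := by
  have hT := (differentiableAt_tangentC (hγ u) hγ').hasDerivAt
  have hone : (fun t => dot2 (tangentC γ t) (tangentC γ t)) = fun _ => 1 :=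
    funext fun t => dot2_tangentC_self (hγ t)
  have hsum := (hasDerivAt_dot2 hT hT).unique (hone ▸ hasDerivAt_const u (1 : ℝ))
  rw [dot2_comm (tangentC γ u)] at hsum
  linarith

theorem deriv_tangentC (hγ : ∀ t, deriv γ t ≠ 0) (hγ' : DifferentiableAt ℝ (deriv γ) u) :
    deriv (tangentC γ) u = (nrm2 (deriv γ u) * curvature γ u) • normalC γ u := by
  have hcurv : nrm2 (deriv γ u) * curvature γ u = dot2 (deriv (tangentC γ) u) (normalC γ u) := by
    rw [curvature, arcDeriv, dot2_smul_left, mul_inv_cancel_left₀ (nrm2_pos (hγ u)).ne']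
  calc deriv (tangentC γ) u
      = dot2 (deriv (tangentC γ) u) (tangentC γ u) • tangentC γ u
          + dot2 (deriv (tangentC γ) u) (normalC γ u) • normalC γ u :=
        eq_dot2_smul_add_dot2_Jrot_smul (dot2_tangentC_self (hγ u)) _
    _ = (nrm2 (deriv γ u) * curvature γ u) • normalC γ u := by
        rw [dot2_deriv_tangentC_tangentC hγ hγ', zero_smul, zero_add, hcurv]

theorem hasDerivAt_normalC (hγ : ∀ t, deriv γ t ≠ 0) (hγ' : DifferentiableAt ℝ (deriv γ) u) :
    HasDerivAt (normalC γ) (-(nrm2 (deriv γ u) * curvature γ u) • tangentC γ u) u := by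
  refine (hasDerivAt_Jrot (differentiableAt_tangentC (hγ u) hγ').hasDerivAt).congr_deriv ?_
  rw [deriv_tangentC hγ hγ', Jrot_smul, normalC, Jrot_Jrot, smul_neg, neg_smul]

/-- The support function `⟨γ, N⟩` of a curve with respect to the origin; a curve is starshaped
when it does not vanish. -/
def supportC (γ : ℝ → ℝ × ℝ) (u : ℝ) : ℝ := dot2 (γ u) (normalC γ u)

theorem hasDerivAt_supportC (hγ : ∀ t, deriv γ t ≠ 0) (hγ' : DifferentiableAt ℝ (deriv γ) u) :
    HasDerivAt (supportC γ) (-curvature γ u * dot2 (γ u) (deriv γ u)) u := by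
  have hγu := (differentiableAt_of_deriv_ne_zero (hγ u)).hasDerivAt
  have horth : dot2 (deriv γ u) (normalC γ u) = 0 := by
    rw [normalC, tangentC, Jrot_smul, dot2_smul_right, dot2_Jrot_self, mul_zero]
  have hspeed : dot2 (γ u) (deriv γ u) = nrm2 (deriv γ u) * dot2 (γ u) (tangentC γ u) := by
    rw [← dot2_smul_right, nrm2_deriv_smul_tangentC (hγ u)]
  refine (hasDerivAt_dot2 hγu (hasDerivAt_normalC hγ hγ')).congr_deriv ?_
  rw [horth, hspeed, dot2_smul_right]
  ring

theorem supportC_ne_zero_of_dot2_deriv_eq_zero (hγ : deriv γ u ≠ 0) (hγ₀ : γ u ≠ 0)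
    (hu : dot2 (γ u) (deriv γ u) = 0) : supportC γ u ≠ 0 := by
  have htangent : dot2 (γ u) (tangentC γ u) = 0 := by
    rw [tangentC, dot2_smul_right, hu, mul_zero]
  have hsq : supportC γ u ^ 2 = dot2 (γ u) (γ u) := by
    simpa [htangent, dot2_tangentC_self hγ, supportC, normalC] using
      dot2_sq_add_dot2_Jrot_sq (γ u) (tangentC γ u)
  exact (pow_ne_zero_iff two_ne_zero).1 (hsq ▸ (dot2_self_pos hγ₀).ne')

end RegularCurve

namespace IsPsiMinimal

variable {φ : ℝ → ℝ} {γ : ℝ → ℝ × ℝ} {u : ℝ}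

theorem curvature_eq (hmin : IsPsiMinimal (fun x => φ (nrm2 x)) γ) (hγ₀ : γ u ≠ 0)
    (hφ : DifferentiableAt ℝ φ (nrm2 (γ u))) :
    curvature γ u = deriv φ (nrm2 (γ u)) / nrm2 (γ u) * supportC γ u := by
  rw [supportC, ← fderiv_comp_nrm2_apply hγ₀ hφ]
  exact sub_eq_zero.1 (hmin u)

theorem hasDerivAt_exp_mul_supportC (hmin : IsPsiMinimal (fun x => φ (nrm2 x)) γ)
    (hγ : ∀ t, deriv γ t ≠ 0) (hγ' : DifferentiableAt ℝ (deriv γ) u) (hγ₀ : γ u ≠ 0)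
    (hφ : DifferentiableAt ℝ φ (nrm2 (γ u))) :
    HasDerivAt (fun t => exp (φ (nrm2 (γ t))) * supportC γ t) 0 u := by
  have hdensity : HasDerivAt (fun t => φ (nrm2 (γ t)))
      (deriv φ (nrm2 (γ u)) / nrm2 (γ u) * dot2 (γ u) (deriv γ u)) u := by
    rw [← fderiv_comp_nrm2_apply hγ₀ hφ]
    exact (differentiableAt_comp_nrm2 hγ₀ hφ).hasFDerivAt.comp_hasDerivAt u
      (differentiableAt_of_deriv_ne_zero (hγ u)).hasDerivAt
  refine (hdensity.exp.mul (hasDerivAt_supportC hγ hγ')).congr_deriv ?_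
  rw [hmin.curvature_eq hγ₀ hφ]
  ring

theorem exp_mul_supportC_eq (hmin : IsPsiMinimal (fun x => φ (nrm2 x)) γ)
    (hγ : ∀ t, deriv γ t ≠ 0) (hγ' : Differentiable ℝ (deriv γ)) (hγ₀ : ∀ t, γ t ≠ 0)
    (hφ : DifferentiableOn ℝ φ (Ioi 0)) (s t : ℝ) :
    exp (φ (nrm2 (γ s))) * supportC γ s = exp (φ (nrm2 (γ t))) * supportC γ t := by
  have hderiv (u : ℝ) := hmin.hasDerivAt_exp_mul_supportC hγ (hγ' u) (hγ₀ u)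
    (hφ.differentiableAt (Ioi_mem_nhds (nrm2_pos (hγ₀ u))))
  exact is_const_of_deriv_eq_zero (fun u => (hderiv u).differentiableAt)
    (fun u => (hderiv u).deriv) s t

end IsPsiMinimal

namespace IsClosedCurve

variable {γ : ℝ → ℝ × ℝ}

theorem differentiable_deriv (hγ : IsClosedCurve γ) : Differentiable ℝ (deriv γ) :=
  (contDiff_infty.1 hγ.smooth 2).differentiable_deriv_two

theorem exists_dot2_deriv_eq_zero (hγ : IsClosedCurve γ) :
    ∃ m, dot2 (γ m) (deriv γ m) = 0 :=
  exists_dot2_deriv_eq_zero_of_nrm2_eq (hγ.smooth.differentiable (by simp)) two_pi_pos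
    (by simpa using congrArg nrm2 (hγ.periodic 0).symm)

end IsClosedCurve

theorem psiMinimal_starshaped_general
    (φ : ℝ → ℝ) (hφ : DifferentiableOn ℝ φ (Ioi 0))
    (γ : ℝ → ℝ × ℝ) (hγ : ∀ u, deriv γ u ≠ 0) (hγ' : Differentiable ℝ (deriv γ))
    (havoid : ∀ u, γ u ≠ 0) (hmin : IsPsiMinimal (fun x => φ (nrm2 x)) γ)
    (hcrit : ∃ m, dot2 (γ m) (deriv γ m) = 0) :
    ∀ u : ℝ, dot2 (γ u) (normalC γ u) ≠ 0 := by
  intro u (hu : supportC γ u = 0)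
  obtain ⟨m, hm⟩ := hcrit
  have hclairaut := hmin.exp_mul_supportC_eq hγ hγ' havoid hφ m u
  rw [hu, mul_zero] at hclairaut
  exact supportC_ne_zero_of_dot2_deriv_eq_zero (hγ m) (havoid m) hm
    ((mul_eq_zero.1 hclairaut).resolve_left (exp_ne_zero _))

/-- a closed ψ-minimal curve avoiding the origin, with ψ a radial
density, is starshaped with respect to the origin. -/
theorem psiMinimal_starshaped
    (φ : ℝ → ℝ) (hφ : ContDiffOn ℝ (⊤ : ℕ∞) φ (Set.Ioi 0))
    (γ : ℝ → ℝ × ℝ) (hγ : IsClosedCurve γ) (havoid : ∀ u, γ u ≠ 0)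
    (hmin : IsPsiMinimal (fun x => φ (nrm2 x)) γ) :
    ∀ u : ℝ, dot2 (γ u) (normalC γ u) ≠ 0 :=
  psiMinimal_starshaped_general φ (hφ.differentiableOn (by simp)) γ hγ.regular
    hγ.differentiable_deriv havoid hmin hγ.exists_dot2_deriv_eq_zero
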